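/- Let A : ℝ → Matrix (Fin n) (Fin n) ℝ be RAP and suppose x' = A(t)x has an (α,K,P)-exponential dichotomy whose Green kernel G has the RAP-integral property. Let h : ℝ → ℝⁿ be RAP and let ξ be the unique RAP solution of z' = A(t)z + h(t). Fix a delay a > 0 and let g : ℝ × ℝⁿ × ℝⁿ → ℝⁿ be bounded, RAP in t uniformly with respect to (x,z) in bounded sets, and satisfy ‖g(t,x,y) − g(t,z,v)‖ ≤ M₁(r)(‖x−z‖ + ‖y−v‖) for all t ∈ ℝ and ‖x‖,‖y‖,‖z‖,‖v‖ ≤ r. Then for every fixed r > 0 there exists ν₀ = ν₀(r) > 0 such that for every ν ∈ [0,ν₀] the delayed system y'(t) = A(t)y(t) + h(t) + ν·g(t, y(t), y(t−a)) has exactly one RAP solution ψ_ν with sup_{t∈ℝ} ‖ψ_ν(t) − ξ(t)‖ ≤ r; moreover ψ_ν(t) → ξ(t) for every t ∈ ℝ as ν → 0⁺. -/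

import Mathlib

open MeasureTheory Filter Metric

noncomputable def opNorm {n : ℕ} (A : Matrix (Fin n) (Fin n) ℝ) : ℝ :=
  ‖LinearMap.toContinuousLinearMap (Matrix.toEuclideanLin A)‖

noncomputable def mulVecE {n : ℕ} (A : Matrix (Fin n) (Fin n) ℝ)
    (v : EuclideanSpace ℝ (Fin n)) : EuclideanSpace ℝ (Fin n) :=
  Matrix.toEuclideanLin A v

noncomputable def clmToMatrix {n : ℕ}
    (L : EuclideanSpace ℝ (Fin n) →L[ℝ] EuclideanSpace ℝ (Fin n)) :
    Matrix (Fin n) (Fin n) ℝ :=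
  Matrix.toEuclideanLin.symm (L : EuclideanSpace ℝ (Fin n) →ₗ[ℝ] EuclideanSpace ℝ (Fin n))

def RelativelyDense (S : Set ℝ) : Prop :=
  ∃ l > 0, ∀ a : ℝ, ∃ τ ∈ S, τ ∈ Set.Icc a (a + l)

def RAP {E : Type*} [NormedAddCommGroup E] (f : ℝ → E) : Prop :=
  (∃ C, ∀ t, ‖f t‖ ≤ C) ∧ UniformContinuous f ∧
  ∀ ε > 0, RelativelyDense
    {τ | Filter.limsup (fun t => ‖f (t + τ) - f t‖) (Filter.cocompact ℝ) < ε}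

def RAPUniform {E F : Type*} [NormedAddCommGroup E] [NormedAddCommGroup F]
    (f : ℝ → E → F) (S : Set E) : Prop :=
  (∃ C, ∀ t, ∀ x ∈ S, ‖f t x‖ ≤ C) ∧
  UniformContinuousOn (fun p : ℝ × E => f p.1 p.2) (Set.univ ×ˢ S) ∧
  ∀ ε > 0, RelativelyDense
    {τ | Filter.limsup (fun t => ⨆ x ∈ S, ‖f (t + τ) x - f t x‖) (Filter.cocompact ℝ) < ε}

def RAPMatrix {n : ℕ} (A : ℝ → Matrix (Fin n) (Fin n) ℝ) : Prop :=
  ∀ i j, RAP (fun t => A t i j)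

def IsFundamentalMatrix {n : ℕ} (A Φ : ℝ → Matrix (Fin n) (Fin n) ℝ) : Prop :=
  Φ 0 = 1 ∧ (∀ t, IsUnit (Φ t)) ∧
  ∀ t i j, HasDerivAt (fun τ => Φ τ i j) ((A t * Φ t) i j) t

def ExpDichotomy {n : ℕ} (Φ : ℝ → Matrix (Fin n) (Fin n) ℝ)
    (α K : ℝ) (P : Matrix (Fin n) (Fin n) ℝ) : Prop :=
  P * P = P ∧
  (∀ t s : ℝ, s ≤ t → opNorm (Φ t * P * (Φ s)⁻¹) ≤ K * Real.exp (-α * (t - s))) ∧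
  (∀ t s : ℝ, t < s → opNorm (Φ t * (1 - P) * (Φ s)⁻¹) ≤ K * Real.exp (-α * (s - t)))

noncomputable def GreenKernel {n : ℕ} (Φ : ℝ → Matrix (Fin n) (Fin n) ℝ)
    (P : Matrix (Fin n) (Fin n) ℝ) (t s : ℝ) : Matrix (Fin n) (Fin n) ℝ :=
  if s ≤ t then Φ t * P * (Φ s)⁻¹ else -(Φ t * (1 - P) * (Φ s)⁻¹)

def RAPIntegralProperty {n : ℕ} (G : ℝ → ℝ → Matrix (Fin n) (Fin n) ℝ) : Prop :=
  ∀ h : ℝ → EuclideanSpace ℝ (Fin n), RAP h →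
    RAP (fun t => ∫ s : ℝ, mulVecE (G t s) (h s))

/-!
By the dichotomy a bounded homogeneous solution vanishes, so a curve `ψ` at bounded distance from
`ξ` solves the perturbed equation exactly when `ψ = ξ + ν • ∫ G(·, s) g(s, ψ(s), ψ(s - a)) ds`.
Two remotely almost periodic functions have a relatively dense set of common remote translation
numbers, which is why `s ↦ g(s, ψ(s), ψ(s - a))` is again remotely almost periodic. For small `ν`
the right-hand side therefore contracts the closed `r`-ball of remotely almost periodic functions
around `ξ`, and its distance from `ξ` is `O(ν)`.
-/

open Pointwise
open scoped ENNReal NNReal UniformConvergence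

/-! ### Remotely almost periodic functions -/

theorem RelativelyDense.mono {S T : Set ℝ} (hS : RelativelyDense S) (hST : S ⊆ T) :
    RelativelyDense T := by
  obtain ⟨l, hl, h⟩ := hS
  refine ⟨l, hl, fun a => ?_⟩
  obtain ⟨τ, hτ, hmem⟩ := h a
  exact ⟨τ, hST hτ, hmem⟩

/- A window of `S` and `T` of length `l` produces a difference `σ - τ ∈ [-l, l]`. Finitely many
differences `σ' - τ'` approximate all of these up to `δ`, and subtracting the matching pair moves
`σ` and `τ` by a bounded amount into `S - S` and `T - T`, at distance less than `δ`. -/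
theorem RelativelyDense.sub_inter_thickening_sub {S T : Set ℝ} (hS : RelativelyDense S)
    (hT : RelativelyDense T) {δ : ℝ} (hδ : 0 < δ) :
    RelativelyDense ((S - S) ∩ thickening δ (T - T)) := by
  obtain ⟨l₁, hl₁, hS⟩ := hS
  obtain ⟨l₂, -, hT⟩ := hT
  set l := max l₁ l₂
  have hl₁l : l₁ ≤ l := le_max_left _ _
  have hl₂l : l₂ ≤ l := le_max_right _ _
  let D : Set ℝ := {d | d ∈ Set.Icc (-l) l ∧ ∃ σ ∈ S, σ - d ∈ T}
  have hD : TotallyBounded D := isCompact_Icc.totallyBounded.subset fun d hd => hd.1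
  obtain ⟨F, hFD, hF, hcover⟩ := finite_approx_of_totallyBounded hD δ hδ
  choose! θ hθS hθT using fun d (hd : d ∈ F) => (hFD hd).2
  obtain ⟨M, hM⟩ := (hF.image fun d => |θ d|).bddAbove
  refine ⟨2 * |M| + l, by positivity, fun a => ?_⟩
  obtain ⟨σ, hσ, hσa⟩ := hS (a + |M|)
  obtain ⟨τ, hτ, hτa⟩ := hT (a + |M|)
  have hdiff : σ - τ ∈ D :=
    ⟨⟨by linarith [hσa.1, hτa.2], by linarith [hσa.2, hτa.1]⟩, σ, hσ, by simpa using hτ⟩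
  obtain ⟨d, hdF, hd⟩ := Set.mem_iUnion₂.1 (hcover hdiff)
  have hθM : |θ d| ≤ |M| := (hM ⟨d, hdF, rfl⟩).trans (le_abs_self M)
  obtain ⟨hθ₁, hθ₂⟩ := abs_le.1 hθM
  refine ⟨σ - θ d, ⟨Set.sub_mem_sub hσ (hθS d hdF), ?_⟩, ?_, ?_⟩
  · refine mem_thickening_iff.2 ⟨τ - (θ d - d), Set.sub_mem_sub hτ (hθT d hdF), ?_⟩
    rw [mem_ball, Real.dist_eq] at hd
    rw [Real.dist_eq]
    convert hd using 2
    ring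
  · linarith [hσa.1]
  · linarith [hσa.2]

section

variable {E F : Type*} [NormedAddCommGroup E] [NormedAddCommGroup F]

/-- The remote `ε`-translation numbers of `f`, phrased with an eventual bound rather than with the
`limsup` of `RAP`, whose real value is meaningful for bounded `f` only. -/
def remoteTranslations (f : ℝ → E) (ε : ℝ) : Set ℝ :=
  {τ | ∀ᶠ t in cocompact ℝ, ‖f (t + τ) - f t‖ < ε}

theorem tendsto_add_right_cocompact (τ : ℝ) :
    Tendsto (fun t : ℝ => t + τ) (cocompact ℝ) (cocompact ℝ) :=
  (Homeomorph.addRight τ).isClosedEmbedding.tendsto_cocompact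

theorem add_mem_remoteTranslations {f : ℝ → E} {ε δ τ σ : ℝ} (hτ : τ ∈ remoteTranslations f ε)
    (hσ : σ ∈ remoteTranslations f δ) : τ + σ ∈ remoteTranslations f (ε + δ) := by
  filter_upwards [(tendsto_add_right_cocompact σ).eventually hτ, hσ] with t htτ htσ
  calc ‖f (t + (τ + σ)) - f t‖
      ≤ ‖f (t + (τ + σ)) - f (t + σ)‖ + ‖f (t + σ) - f t‖ := norm_sub_le_norm_sub_add_norm_sub ..
    _ < ε + δ := by
      rw [add_comm τ, ← add_assoc]
      exact add_lt_add htτ htσ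

theorem neg_mem_remoteTranslations {f : ℝ → E} {ε τ : ℝ} (hτ : τ ∈ remoteTranslations f ε) :
    -τ ∈ remoteTranslations f ε := by
  filter_upwards [(tendsto_add_right_cocompact (-τ)).eventually hτ] with t ht
  rwa [neg_add_cancel_right, norm_sub_rev] at ht

theorem sub_remoteTranslations_subset (f : ℝ → E) (ε : ℝ) :
    remoteTranslations f ε - remoteTranslations f ε ⊆ remoteTranslations f (ε + ε) := by
  rintro _ ⟨τ, hτ, σ, hσ, rfl⟩
  simpa only [sub_eq_add_neg] using
    add_mem_remoteTranslations hτ (neg_mem_remoteTranslations hσ)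

theorem thickening_remoteTranslations_subset {f : ℝ → E} (hf : UniformContinuous f) {ε η : ℝ}
    (hε : 0 < ε) :
    ∃ δ > 0, thickening δ (remoteTranslations f η) ⊆ remoteTranslations f (ε + η) := by
  obtain ⟨δ, hδ, h⟩ := Metric.uniformContinuous_iff.1 hf ε hε
  refine ⟨δ, hδ, fun τ hτ => ?_⟩
  obtain ⟨σ, hσ, hτσ⟩ := mem_thickening_iff.1 hτ
  have hsmall : τ - σ ∈ remoteTranslations f ε := Eventually.of_forall fun t => by
    rw [← dist_eq_norm]
    exact h (by simpa [Real.dist_eq] using hτσ)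
  simpa using add_mem_remoteTranslations hsmall hσ

theorem rap_iff_remoteTranslations {f : ℝ → E} : RAP f ↔ (∃ C, ∀ t, ‖f t‖ ≤ C) ∧
    UniformContinuous f ∧ ∀ ε > 0, RelativelyDense (remoteTranslations f ε) := by
  refine and_congr_right fun ⟨C, hC⟩ => and_congr_right fun _ =>
    ⟨fun h ε hε => ?_, fun h ε hε => ?_⟩
  · have hbdd (τ t : ℝ) : ‖f (t + τ) - f t‖ ≤ C + C :=
      (norm_sub_le _ _).trans (add_le_add (hC _) (hC _))
    exact (h ε hε).mono fun τ hτ =>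
      eventually_lt_of_limsup_lt hτ ⟨C + C, eventually_map.2 (.of_forall (hbdd τ))⟩
  · refine (h (ε / 2) (half_pos hε)).mono fun τ hτ => lt_of_le_of_lt ?_ (half_lt_self hε)
    refine limsup_le_of_le (IsBoundedUnder.isCoboundedUnder_le ⟨0, ?_⟩) (hτ.mono fun t => le_of_lt)
    exact eventually_map.2 (.of_forall fun t => norm_nonneg _)

namespace RAP

theorem continuous {f : ℝ → E} (hf : RAP f) : Continuous f := hf.2.1.continuous

theorem relativelyDense_remoteTranslations {f : ℝ → E} (hf : RAP f) {ε : ℝ} (hε : 0 < ε) :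
    RelativelyDense (remoteTranslations f ε) :=
  (rap_iff_remoteTranslations.1 hf).2.2 ε hε

theorem relativelyDense_inter_remoteTranslations {f : ℝ → E} {g : ℝ → F} (hf : RAP f) (hg : RAP g)
    {ε : ℝ} (hε : 0 < ε) :
    RelativelyDense (remoteTranslations f ε ∩ remoteTranslations g ε) := by
  obtain ⟨δ, hδ, hthick⟩ := thickening_remoteTranslations_subset hg.2.1 (η := ε / 4 + ε / 4)
    (half_pos hε)
  rw [show ε / 2 + (ε / 4 + ε / 4) = ε by ring] at hthick
  refine ((hf.relativelyDense_remoteTranslations (half_pos hε)).sub_inter_thickening_sub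
    (hg.relativelyDense_remoteTranslations (ε := ε / 4) (by positivity)) hδ).mono
    (Set.inter_subset_inter ?_ ?_)
  · simpa using sub_remoteTranslations_subset f (ε / 2)
  · exact (thickening_subset_of_subset δ (sub_remoteTranslations_subset g (ε / 4))).trans hthick

theorem prodMk {f : ℝ → E} {g : ℝ → F} (hf : RAP f) (hg : RAP g) : RAP fun t => (f t, g t) := by
  obtain ⟨C, hC⟩ := hf.1
  obtain ⟨D, hD⟩ := hg.1
  refine rap_iff_remoteTranslations.2 ⟨⟨max C D, fun t => max_le_max (hC t) (hD t)⟩,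
    hf.2.1.prodMk hg.2.1, fun ε hε => ?_⟩
  refine (hf.relativelyDense_inter_remoteTranslations hg hε).mono fun τ ⟨hτf, hτg⟩ => ?_
  filter_upwards [hτf, hτg] with t htf htg
  exact max_lt htf htg

theorem of_modulus {f : ℝ → E} {g : ℝ → F} (hf : RAP f) (hg : ∃ C, ∀ t, ‖g t‖ ≤ C)
    (h : ∀ ε > 0, ∃ δ > 0, ∀ s t, ‖f s - f t‖ < δ → ‖g s - g t‖ < ε) : RAP g := by
  refine rap_iff_remoteTranslations.2 ⟨hg, Metric.uniformContinuous_iff.2 fun ε hε => ?_,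
    fun ε hε => ?_⟩ <;> obtain ⟨δ, hδ, hfg⟩ := h ε hε
  · obtain ⟨η, hη, hfη⟩ := Metric.uniformContinuous_iff.1 hf.2.1 δ hδ
    refine ⟨η, hη, fun s t hst => ?_⟩
    rw [dist_eq_norm]
    exact hfg s t (by simpa only [dist_eq_norm] using hfη hst)
  · exact (hf.relativelyDense_remoteTranslations hδ).mono fun τ hτ => hτ.mono fun t => hfg _ t

theorem comp_lipschitzWith {f : ℝ → E} (hf : RAP f) {Ψ : E → F} {K : ℝ≥0}
    (hΨ : LipschitzWith K Ψ) : RAP fun t => Ψ (f t) := by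
  obtain ⟨C, hC⟩ := hf.1
  refine hf.of_modulus ⟨‖Ψ 0‖ + K * C, fun t => ?_⟩ fun ε hε => ?_
  · calc ‖Ψ (f t)‖ ≤ ‖Ψ 0‖ + ‖Ψ (f t) - Ψ 0‖ := norm_le_norm_add_norm_sub' ..
      _ ≤ ‖Ψ 0‖ + K * C := by
        gcongr
        refine (hΨ.norm_sub_le _ _).trans ?_
        rw [sub_zero]
        gcongr
        exact hC t
  · obtain ⟨δ, hδ, hδε⟩ := exists_pos_mul_lt hε K
    refine ⟨δ, hδ, fun s t hst => ((hΨ.norm_sub_le _ _).trans ?_).trans_lt hδε⟩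
    gcongr

theorem add {f g : ℝ → E} (hf : RAP f) (hg : RAP g) : RAP fun t => f t + g t :=
  (hf.prodMk hg).comp_lipschitzWith (LipschitzWith.prod_fst.add LipschitzWith.prod_snd)

theorem const_smul [NormedSpace ℝ E] {f : ℝ → E} (hf : RAP f) (c : ℝ) : RAP fun t => c • f t :=
  hf.comp_lipschitzWith (lipschitzWith_smul c)

theorem comp_sub_right {f : ℝ → E} (hf : RAP f) (a : ℝ) : RAP fun t => f (t - a) := by
  obtain ⟨C, hC⟩ := hf.1
  refine rap_iff_remoteTranslations.2 ⟨⟨C, fun t => hC _⟩,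
    hf.2.1.comp (uniformContinuous_id.sub uniformContinuous_const), fun ε hε => ?_⟩
  refine (hf.relativelyDense_remoteTranslations hε).mono fun τ hτ => ?_
  filter_upwards [(tendsto_add_right_cocompact (-a)).eventually hτ] with t ht
  rwa [add_right_comm, ← sub_eq_add_neg, ← sub_eq_add_neg] at ht

theorem of_forall_exists_norm_sub_le {f : ℝ → E}
    (h : ∀ ε > 0, ∃ g : ℝ → E, RAP g ∧ ∀ t, ‖f t - g t‖ ≤ ε) : RAP f := by
  have close {g : ℝ → E} {ε : ℝ} (hg : ∀ t, ‖f t - g t‖ ≤ ε / 3) (s t : ℝ)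
      (hst : ‖g s - g t‖ < ε / 3) : ‖f s - f t‖ < ε := by
    calc ‖f s - f t‖ = ‖(f s - g s) + (g s - g t) - (f t - g t)‖ := by congr 1; abel
      _ ≤ ‖f s - g s‖ + ‖g s - g t‖ + ‖f t - g t‖ :=
        (norm_sub_le _ _).trans (by gcongr; exact norm_add_le _ _)
      _ < ε := by linarith [hg s, hg t]
  refine rap_iff_remoteTranslations.2 ⟨?_, Metric.uniformContinuous_iff.2 fun ε hε => ?_,
    fun ε hε => ?_⟩
  · obtain ⟨g, ⟨⟨C, hC⟩, -⟩, hfg⟩ := h 1 one_pos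
    refine ⟨C + 1, fun t => (norm_le_norm_add_norm_sub' (f t) (g t)).trans ?_⟩
    gcongr
    exacts [hC t, hfg t]
  · obtain ⟨g, hg, hfg⟩ := h (ε / 3) (by positivity)
    obtain ⟨δ, hδ, hgδ⟩ := Metric.uniformContinuous_iff.1 hg.2.1 (ε / 3) (by positivity)
    refine ⟨δ, hδ, fun s t hst => ?_⟩
    rw [dist_eq_norm]
    exact close hfg s t (by simpa only [dist_eq_norm] using hgδ hst)
  · obtain ⟨g, hg, hfg⟩ := h (ε / 3) (by positivity)
    exact (hg.relativelyDense_remoteTranslations (by positivity)).mono fun τ hτ =>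
      hτ.mono fun t => close hfg _ t

end RAP

namespace RAPUniform

variable {f : ℝ → E → F} {S : Set E}

theorem memℓp_infty (hf : RAPUniform f S) (t : ℝ) : Memℓp (fun x : S => f t x) ∞ := by
  obtain ⟨C, hC⟩ := hf.1
  refine _root_.memℓp_infty ⟨C, ?_⟩
  rintro _ ⟨x, rfl⟩
  exact hC t x x.2

/-- The family `f` over `S` as a curve of bounded functions on `S`. It turns remote almost
periodicity uniform over `S` into remote almost periodicity in the supremum norm. -/
def toLp (hf : RAPUniform f S) (t : ℝ) : lp (fun _ : S => F) ∞ :=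
  ⟨fun x => f t x, hf.memℓp_infty t⟩

theorem norm_toLp_sub (hf : RAPUniform f S) (s t : ℝ) :
    ‖hf.toLp s - hf.toLp t‖ = ⨆ x ∈ S, ‖f s x - f t x‖ := by
  have hbdd : BddAbove (Set.range fun x : S => ‖f s x - f t x‖) :=
    memℓp_infty_iff.1 ((hf.memℓp_infty s).sub (hf.memℓp_infty t))
  rw [lp.norm_eq_ciSup]
  refine ciSup_subtype hbdd ?_
  rw [Real.sSup_empty]
  exact Real.iSup_nonneg fun _ => norm_nonneg _

theorem rap_toLp (hf : RAPUniform f S) : RAP hf.toLp := by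
  obtain ⟨⟨C, hC⟩, hcont, hdense⟩ := id hf
  refine ⟨⟨max C 0, fun t => lp.norm_le_of_forall_le (le_max_right _ _) fun x =>
    (hC t x x.2).trans (le_max_left _ _)⟩, Metric.uniformContinuous_iff.2 fun ε hε => ?_, ?_⟩
  · obtain ⟨δ, hδ, h⟩ := Metric.uniformContinuousOn_iff.1 hcont (ε / 2) (half_pos hε)
    refine ⟨δ, hδ, fun {s t} hst => ?_⟩
    rw [dist_eq_norm]
    refine (lp.norm_le_of_forall_le (half_pos hε).le fun x => ?_).trans_lt (half_lt_self hε)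
    have hx := h (s, (x : E)) ⟨trivial, x.2⟩ (t, (x : E)) ⟨trivial, x.2⟩
      (by simpa [Prod.dist_eq, hδ] using hst)
    rw [dist_eq_norm] at hx
    exact hx.le
  · simpa only [norm_toLp_sub] using hdense

theorem comp_rap (hf : RAPUniform f S) {φ : ℝ → E} (hφ : RAP φ) (hφS : ∀ t, φ t ∈ S) :
    RAP fun t => f t (φ t) := by
  obtain ⟨⟨C, hC⟩, hcont, -⟩ := id hf
  refine (hf.rap_toLp.prodMk hφ).of_modulus ⟨C, fun t => hC t _ (hφS t)⟩ fun ε hε => ?_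
  obtain ⟨δ, hδ, h⟩ := Metric.uniformContinuousOn_iff.1 hcont (ε / 2) (half_pos hε)
  refine ⟨min (ε / 2) δ, lt_min (half_pos hε) hδ, fun s t hst => ?_⟩
  obtain ⟨hfst, hφst⟩ := max_lt_iff.1 hst
  have htime : ‖f s (φ s) - f t (φ s)‖ < ε / 2 :=
    (lp.norm_apply_le_norm ENNReal.top_ne_zero (hf.toLp s - hf.toLp t) ⟨φ s, hφS s⟩).trans_lt
      (hfst.trans_le (min_le_left _ _))
  have hspace : ‖f t (φ s) - f t (φ t)‖ < ε / 2 := by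
    rw [← dist_eq_norm]
    refine h (t, φ s) ⟨trivial, hφS s⟩ (t, φ t) ⟨trivial, hφS t⟩ ?_
    simpa [Prod.dist_eq, hδ, dist_eq_norm] using hφst.trans_le (min_le_right _ _)
  calc ‖f s (φ s) - f t (φ t)‖
      ≤ ‖f s (φ s) - f t (φ s)‖ + ‖f t (φ s) - f t (φ t)‖ := norm_sub_le_norm_sub_add_norm_sub ..
    _ < ε := by linarith

end RAPUniform

end

/-! ### Contractions of balls of remotely almost periodic functions -/

section RapBall

variable {E : Type*} [NormedAddCommGroup E]

/-- The remotely almost periodic functions at uniform distance at most `r` from `ξ`. -/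
def rapBall (ξ : ℝ → E) (r : ℝ) : Set (ℝ → E) :=
  {ψ | RAP ψ ∧ ∀ t, ‖ψ t - ξ t‖ ≤ r}

theorem norm_le_of_mem_rapBall {ξ ψ : ℝ → E} {r C : ℝ} (hψ : ψ ∈ rapBall ξ r)
    (hξ : ∀ t, ‖ξ t‖ ≤ C) (t : ℝ) : ‖ψ t‖ ≤ C + r :=
  (norm_le_norm_add_norm_sub' (ψ t) (ξ t)).trans (add_le_add (hξ t) (hψ.2 t))

theorem isClosed_rapBall (ξ : ℝ → E) (r : ℝ) :
    IsClosed (UniformFun.toFun ⁻¹' rapBall ξ r : Set (ℝ →ᵤ E)) := by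
  refine isClosed_of_closure_subset fun ψ hψ => ?_
  have approx (ε : ℝ) (hε : 0 < ε) :
      ∃ φ ∈ rapBall ξ r, ∀ t, ‖UniformFun.toFun ψ t - φ t‖ ≤ ε := by
    obtain ⟨φ, hφ, hψφ⟩ := EMetric.mem_closure_iff.1 hψ _ (ENNReal.ofReal_pos.2 hε)
    refine ⟨UniformFun.toFun φ, hφ, fun t => ?_⟩
    rw [← dist_eq_norm, ← edist_le_ofReal hε.le]
    exact UniformFun.edist_eval_le.trans hψφ.le
  refine ⟨.of_forall_exists_norm_sub_le fun ε hε => ?_,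
    fun t => le_of_forall_pos_le_add fun ε hε => ?_⟩
  · obtain ⟨φ, hφ, hψφ⟩ := approx ε hε
    exact ⟨φ, hφ.1, hψφ⟩
  · obtain ⟨φ, hφ, hψφ⟩ := approx ε hε
    rw [add_comm]
    exact (norm_sub_le_norm_sub_add_norm_sub _ (φ t) _).trans (add_le_add (hψφ t) (hφ.2 t))

/-- `T` is Lipschitz on `B` with constant `L` in the (possibly infinite) supremum distance. -/
def SupLipschitzOn (L : ℝ) (T : (ℝ → E) → ℝ → E) (B : Set (ℝ → E)) : Prop :=
  ∀ ψ ∈ B, ∀ φ ∈ B, ∀ d, (∀ t, ‖ψ t - φ t‖ ≤ d) → ∀ t, ‖T ψ t - T φ t‖ ≤ L * d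

theorem existsUnique_fixedPoint_of_mapsTo_rapBall [CompleteSpace E] {ξ : ℝ → E} {r : ℝ}
    (hξ : ξ ∈ rapBall ξ r) {T : (ℝ → E) → ℝ → E} {q : ℝ≥0} (hq : q < 1)
    (hmaps : Set.MapsTo T (rapBall ξ r) (rapBall ξ r)) (hlip : SupLipschitzOn q T (rapBall ξ r)) :
    ∃! ψ, ψ ∈ rapBall ξ r ∧ ψ = T ψ := by
  let B : Set (ℝ →ᵤ E) := UniformFun.toFun ⁻¹' rapBall ξ r
  have edist_ne_top {ψ φ : ℝ →ᵤ E} (hψ : ψ ∈ B) (hφ : φ ∈ B) : edist ψ φ ≠ ∞ := by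
    refine ne_top_of_le_ne_top (ENNReal.ofReal_ne_top (r := r + r))
      (UniformFun.edist_le.2 fun t => ?_)
    rw [edist_dist]
    refine ENNReal.ofReal_le_ofReal ((dist_triangle_right _ _ (ξ t)).trans ?_)
    simpa only [dist_eq_norm] using add_le_add (hψ.2 t) (hφ.2 t)
  let T' : (ℝ →ᵤ E) → (ℝ →ᵤ E) := fun ψ => UniformFun.ofFun (T (UniformFun.toFun ψ))
  have hmaps' : Set.MapsTo T' B B := fun ψ hψ => hmaps hψ
  have hcontr : ContractingWith q (hmaps'.restrict T' B B) := by
    refine ⟨mod_cast hq, fun ⟨ψ, hψ⟩ ⟨φ, hφ⟩ => ?_⟩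
    change edist (T' ψ) (T' φ) ≤ q * edist ψ φ
    lift edist ψ φ to ℝ≥0 using edist_ne_top hψ hφ with d hd
    rw [← ENNReal.coe_mul, UniformFun.edist_le]
    simp only [edist_le_coe, ← NNReal.coe_le_coe, coe_nndist, dist_eq_norm]
    refine hlip _ hψ _ hφ d fun t => ?_
    rw [← dist_eq_norm, ← coe_nndist, NNReal.coe_le_coe, ← edist_le_coe, hd]
    exact UniformFun.edist_eval_le
  obtain ⟨ψ, hψB, hψ, -⟩ := hcontr.exists_fixedPoint' (isClosed_rapBall ξ r).isComplete hmaps'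
    (x := UniformFun.ofFun ξ) hξ (edist_ne_top hξ (hmaps hξ))
  refine ⟨UniformFun.toFun ψ, ⟨hψB, congrArg UniformFun.toFun hψ.symm⟩, fun φ ⟨hφB, hφ⟩ => ?_⟩
  have heq := hcontr.eq_or_edist_eq_top_of_fixedPoints (x := ⟨UniformFun.ofFun φ, hφB⟩)
    (y := ⟨ψ, hψB⟩) (Subtype.ext (congrArg UniformFun.ofFun hφ.symm)) (Subtype.ext hψ)
  exact congrArg Subtype.val (heq.resolve_right (edist_ne_top hφB hψB))

end RapBall

/-! ### Green operators of exponential dichotomies -/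

section ExponentialKernel

variable {α : ℝ}

theorem integrable_exp_neg_mul_abs_sub (hα : 0 < α) (t : ℝ) :
    Integrable fun s => Real.exp (-α * |s - t|) := by
  suffices h : Integrable fun s : ℝ => Real.exp (-α * |s|) from h.comp_sub_right t
  rw [← integrableOn_univ, ← Set.Iic_union_Ioi (a := (0 : ℝ)), integrableOn_union]
  constructor
  · refine (integrableOn_exp_mul_Iic hα 0).congr_fun (fun s hs => ?_) measurableSet_Iic
    simp only [abs_of_nonpos (Set.mem_Iic.1 hs), neg_mul_neg]
  · refine (integrableOn_exp_mul_Ioi (neg_lt_zero.2 hα) 0).congr_fun (fun s hs => ?_)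
      measurableSet_Ioi
    simp only [abs_of_pos (Set.mem_Ioi.1 hs)]

theorem integral_exp_neg_mul_abs_sub (hα : 0 < α) (t : ℝ) :
    ∫ s, Real.exp (-α * |s - t|) = 2 / α := by
  rw [integral_sub_right_eq_self (fun s => Real.exp (-α * |s|)) t,
    integral_comp_abs (f := fun s => Real.exp (-α * s)),
    integral_exp_mul_Ioi (neg_lt_zero.2 hα) 0, mul_zero, Real.exp_zero, neg_div_neg_eq,
    mul_one_div]

end ExponentialKernel

section MovingEndpoint

variable {E : Type*} [NormedAddCommGroup E] [NormedSpace ℝ E] [CompleteSpace E] {F : ℝ → E}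

theorem hasDerivAt_integral_Iic (hF : Continuous F) (hint : ∀ t, IntegrableOn F (Set.Iic t))
    (t : ℝ) : HasDerivAt (fun u => ∫ s in Set.Iic u, F s) (F t) t := by
  have h : (fun u => ∫ s in Set.Iic u, F s) =
      fun u => (∫ s in (0 : ℝ)..u, F s) + ∫ s in Set.Iic 0, F s := by
    ext u
    rw [← intervalIntegral.integral_Iic_sub_Iic (hint 0) (hint u), sub_add_cancel]
  rw [h]
  exact (hF.integral_hasStrictDerivAt 0 t).hasDerivAt.add_const _

theorem hasDerivAt_integral_Ioi (hF : Continuous F) (hint : ∀ t, IntegrableOn F (Set.Ioi t))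
    (t : ℝ) : HasDerivAt (fun u => ∫ s in Set.Ioi u, F s) (-F t) t := by
  have h : (fun u => ∫ s in Set.Ioi u, F s) =
      fun u => (∫ s in Set.Ioi 0, F s) - ∫ s in (0 : ℝ)..u, F s := by
    ext u
    rw [← intervalIntegral.integral_Ioi_sub_Ioi' (hint 0) (hint u), sub_sub_cancel]
  rw [h]
  exact (hF.integral_hasStrictDerivAt 0 t).hasDerivAt.const_sub _

end MovingEndpoint

section Dichotomy

variable {E : Type*} [NormedAddCommGroup E] [NormedSpace ℝ E]

/-- `Φ` is a fundamental solution of `x' = A(t)x`: an operator solution with invertible values.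
It is not normalised at `0`, as the Green operator does not depend on the normalisation once the
projection is conjugated accordingly. -/
def IsFundamentalSolution (A : ℝ → E →L[ℝ] E) (Φ : ℝ → (E →L[ℝ] E)ˣ) : Prop :=
  ∀ t, HasDerivAt (fun s => (Φ s : E →L[ℝ] E)) (A t * Φ t) t

/-- The operator form of `ExpDichotomy`, for fundamental solutions in a normed space. -/
structure HasExpDichotomy (Φ : ℝ → (E →L[ℝ] E)ˣ) (α K : ℝ) (P : E →L[ℝ] E) : Prop where
  isIdempotentElem : IsIdempotentElem P
  norm_stable_le : ∀ t s, s ≤ t → ‖Φ t * P * ↑(Φ s)⁻¹‖ ≤ K * Real.exp (-α * (t - s))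
  norm_unstable_le : ∀ t s, t < s → ‖Φ t * (1 - P) * ↑(Φ s)⁻¹‖ ≤ K * Real.exp (-α * (s - t))

/-- The operator form of `GreenKernel`. -/
noncomputable def greenOperator (Φ : ℝ → (E →L[ℝ] E)ˣ) (P : E →L[ℝ] E) (t s : ℝ) : E →L[ℝ] E :=
  if s ≤ t then Φ t * P * ↑(Φ s)⁻¹ else -(Φ t * (1 - P) * ↑(Φ s)⁻¹)

/-- The candidate `∫ G(t,s) f(s) ds` for the bounded solution of `y' = A(t)y + f(t)`. -/
noncomputable def greenIntegral (Φ : ℝ → (E →L[ℝ] E)ˣ) (P : E →L[ℝ] E) (f : ℝ → E) (t : ℝ) : E :=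
  ∫ s, greenOperator Φ P t s (f s)

variable {A : ℝ → E →L[ℝ] E} {Φ : ℝ → (E →L[ℝ] E)ˣ} {P : E →L[ℝ] E} {α K : ℝ} {f : ℝ → E}

theorem units_inv_apply_apply (u : (E →L[ℝ] E)ˣ) (x : E) :
    (↑u⁻¹ : E →L[ℝ] E) ((u : E →L[ℝ] E) x) = x :=
  inv_smul_smul u x

theorem units_apply_inv_apply (u : (E →L[ℝ] E)ˣ) (x : E) :
    (u : E →L[ℝ] E) ((↑u⁻¹ : E →L[ℝ] E) x) = x :=
  smul_inv_smul u x

theorem greenOperator_of_le {t s : ℝ} (h : s ≤ t) :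
    greenOperator Φ P t s = Φ t * P * ↑(Φ s)⁻¹ :=
  if_pos h

theorem greenOperator_of_lt {t s : ℝ} (h : t < s) :
    greenOperator Φ P t s = -(Φ t * (1 - P) * ↑(Φ s)⁻¹) :=
  if_neg h.not_ge

theorem greenIntegral_const_smul (c : ℝ) :
    greenIntegral Φ P (fun t => c • f t) = fun t => c • greenIntegral Φ P f t := by
  ext t
  simp only [greenIntegral, map_smul, integral_smul]

namespace IsFundamentalSolution

variable [CompleteSpace E]

theorem hasDerivAt_inv (hΦ : IsFundamentalSolution A Φ) (t : ℝ) :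
    HasDerivAt (fun s => (↑(Φ s)⁻¹ : E →L[ℝ] E)) (-(↑(Φ t)⁻¹ * A t)) t := by
  have h := (hasFDerivAt_ringInverse (𝕜 := ℝ) (Φ t)).comp_hasDerivAt t (hΦ t)
  simpa [Function.comp_def, mul_assoc] using h

theorem continuous_inv (hΦ : IsFundamentalSolution A Φ) :
    Continuous fun s => (↑(Φ s)⁻¹ : E →L[ℝ] E) :=
  continuous_iff_continuousAt.2 fun t => (hΦ.hasDerivAt_inv t).continuousAt

theorem aestronglyMeasurable_greenOperator_apply (hΦ : IsFundamentalSolution A Φ)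
    (hf : Continuous f) (t : ℝ) :
    AEStronglyMeasurable (fun s => greenOperator Φ P t s (f s)) volume := by
  have hcont (Q : E →L[ℝ] E) : StronglyMeasurable fun s => (Q * ↑(Φ s)⁻¹) (f s) :=
    ((continuous_const.mul hΦ.continuous_inv).clm_apply hf).stronglyMeasurable
  have hite : StronglyMeasurable fun s => if s ≤ t then (Φ t * P * ↑(Φ s)⁻¹) (f s)
      else -(Φ t * (1 - P) * ↑(Φ s)⁻¹) (f s) :=
    (hcont _).ite measurableSet_Iic (hcont _).neg
  refine hite.aestronglyMeasurable.congr (.of_forall fun s => ?_)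
  dsimp only [greenOperator]
  split_ifs <;> rfl

theorem exists_eq_apply (hΦ : IsFundamentalSolution A Φ) {y : ℝ → E}
    (hy : ∀ t, HasDerivAt y (A t (y t)) t) : ∃ w, ∀ t, y t = (Φ t : E →L[ℝ] E) w := by
  have hconst (t : ℝ) : HasDerivAt (fun s => (↑(Φ s)⁻¹ : E →L[ℝ] E) (y s)) 0 t := by
    simpa using (hΦ.hasDerivAt_inv t).clm_apply (hy t)
  refine ⟨(↑(Φ 0)⁻¹ : E →L[ℝ] E) (y 0), fun t => ?_⟩
  rw [is_const_of_deriv_eq_zero (fun s => (hconst s).differentiableAt)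
    (fun s => (hconst s).deriv) 0 t, units_apply_inv_apply]

end IsFundamentalSolution

namespace HasExpDichotomy

theorem norm_greenOperator_le (hP : HasExpDichotomy Φ α K P) (t s : ℝ) :
    ‖greenOperator Φ P t s‖ ≤ K * Real.exp (-α * |s - t|) := by
  rcases le_or_gt s t with h | h
  · rw [greenOperator_of_le h, abs_sub_comm, abs_of_nonneg (sub_nonneg.2 h)]
    exact hP.norm_stable_le t s h
  · rw [greenOperator_of_lt h, norm_neg, abs_of_pos (sub_pos.2 h)]
    exact hP.norm_unstable_le t s h

theorem const_nonneg (hP : HasExpDichotomy Φ α K P) : 0 ≤ K := by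
  simpa using (norm_nonneg _).trans (hP.norm_greenOperator_le 0 0)

theorem norm_greenOperator_apply_le (hP : HasExpDichotomy Φ α K P) {x : E} {C : ℝ}
    (hx : ‖x‖ ≤ C) (t s : ℝ) :
    ‖greenOperator Φ P t s x‖ ≤ K * Real.exp (-α * |s - t|) * C :=
  (ContinuousLinearMap.le_of_opNorm_le _ (hP.norm_greenOperator_le t s) x).trans <|
    mul_le_mul_of_nonneg_left hx (mul_nonneg hP.const_nonneg (Real.exp_pos _).le)

theorem norm_greenIntegral_le (hP : HasExpDichotomy Φ α K P) (hα : 0 < α) {C : ℝ}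
    (hfC : ∀ t, ‖f t‖ ≤ C) (t : ℝ) : ‖greenIntegral Φ P f t‖ ≤ 2 * K / α * C := by
  have hbound := ((integrable_exp_neg_mul_abs_sub hα t).const_mul K).mul_const C
  calc ‖greenIntegral Φ P f t‖
      ≤ ∫ s, K * Real.exp (-α * |s - t|) * C :=
        norm_integral_le_of_norm_le hbound <|
          .of_forall fun s => hP.norm_greenOperator_apply_le (hfC s) t s
    _ = 2 * K / α * C := by
        rw [integral_mul_const, integral_const_mul, integral_exp_neg_mul_abs_sub hα]
        ring

/- `Φ(0)Pw = G(0,s)Φ(s)w` for all `s ≤ 0` tends to zero as `s → -∞`, and so does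
`-Φ(0)(1 - P)w = G(0,s)Φ(s)w` for `s > 0` as `s → ∞`. -/
theorem eq_zero_of_forall_norm_apply_le (hP : HasExpDichotomy Φ α K P) (hα : 0 < α) {w : E}
    {C : ℝ} (hw : ∀ t, ‖(Φ t : E →L[ℝ] E) w‖ ≤ C) : w = 0 := by
  have hgreen (t s : ℝ) :
      ‖greenOperator Φ P t s ((Φ s : E →L[ℝ] E) w)‖ ≤ K * Real.exp (-α * |s - t|) * C :=
    hP.norm_greenOperator_apply_le (hw s) t s
  have htendsto {l : Filter ℝ} (hl : Tendsto (fun s : ℝ => |s|) l atTop) :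
      Tendsto (fun s => K * Real.exp (-α * |s - 0|) * C) l (nhds 0) := by
    simpa using ((Real.tendsto_exp_comp_nhds_zero.2
      (hl.const_mul_atTop_of_neg (neg_lt_zero.2 hα))).const_mul K).mul_const C
  have hstable : (Φ 0 : E →L[ℝ] E) (P w) = 0 := by
    refine norm_le_zero_iff.1 (ge_of_tendsto (htendsto tendsto_abs_atBot_atTop) ?_)
    filter_upwards [eventually_le_atBot 0] with s hs
    simpa [greenOperator_of_le hs, units_inv_apply_apply] using hgreen 0 s
  have hunstable : (Φ 0 : E →L[ℝ] E) ((1 - P) w) = 0 := by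
    refine norm_le_zero_iff.1 (ge_of_tendsto (htendsto tendsto_abs_atTop_atTop) ?_)
    filter_upwards [eventually_gt_atTop 0] with s hs
    rw [← norm_neg, ← map_neg]
    simpa [greenOperator_of_lt hs, units_inv_apply_apply] using hgreen 0 s
  have hsum : (Φ 0 : E →L[ℝ] E) w = 0 := by
    rw [← add_sub_cancel (P w) w, map_add, hstable, zero_add]
    exact hunstable
  rw [← units_inv_apply_apply (Φ 0) w, hsum, map_zero]

variable [CompleteSpace E]

theorem integrable_greenOperator_apply (hP : HasExpDichotomy Φ α K P)
    (hΦ : IsFundamentalSolution A Φ) (hα : 0 < α) (hf : Continuous f) {C : ℝ}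
    (hfC : ∀ t, ‖f t‖ ≤ C) (t : ℝ) : Integrable fun s => greenOperator Φ P t s (f s) :=
  (((integrable_exp_neg_mul_abs_sub hα t).const_mul K).mul_const C).mono'
    (hΦ.aestronglyMeasurable_greenOperator_apply hf t)
    (.of_forall fun s => hP.norm_greenOperator_apply_le (hfC s) t s)

theorem greenIntegral_sub (hP : HasExpDichotomy Φ α K P)
    (hΦ : IsFundamentalSolution A Φ) (hα : 0 < α) {g : ℝ → E} {C D : ℝ} (hf : Continuous f)
    (hfC : ∀ t, ‖f t‖ ≤ C) (hg : Continuous g) (hgD : ∀ t, ‖g t‖ ≤ D) (t : ℝ) :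
    greenIntegral Φ P f t - greenIntegral Φ P g t = greenIntegral Φ P (fun s => f s - g s) t := by
  simp only [greenIntegral, map_sub]
  exact (integral_sub (hP.integrable_greenOperator_apply hΦ hα hf hfC t)
    (hP.integrable_greenOperator_apply hΦ hα hg hgD t)).symm

theorem integrableOn_Iic (hP : HasExpDichotomy Φ α K P)
    (hΦ : IsFundamentalSolution A Φ) (hα : 0 < α) (hf : Continuous f) {C : ℝ}
    (hfC : ∀ t, ‖f t‖ ≤ C) (t : ℝ) :
    IntegrableOn (fun s => (P * ↑(Φ s)⁻¹) (f s)) (Set.Iic t) := by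
  refine IntegrableOn.congr_fun ((↑(Φ t)⁻¹ : E →L[ℝ] E).integrable_comp
    (hP.integrable_greenOperator_apply hΦ hα hf hfC t).integrableOn) (fun s hs => ?_)
    measurableSet_Iic
  simp [greenOperator_of_le (Set.mem_Iic.1 hs), units_inv_apply_apply]

theorem integrableOn_Ioi (hP : HasExpDichotomy Φ α K P)
    (hΦ : IsFundamentalSolution A Φ) (hα : 0 < α) (hf : Continuous f) {C : ℝ}
    (hfC : ∀ t, ‖f t‖ ≤ C) (t : ℝ) :
    IntegrableOn (fun s => ((1 - P) * ↑(Φ s)⁻¹) (f s)) (Set.Ioi t) := by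
  refine IntegrableOn.congr_fun ((-↑(Φ t)⁻¹ : E →L[ℝ] E).integrable_comp
    (hP.integrable_greenOperator_apply hΦ hα hf hfC t).integrableOn) (fun s hs => ?_)
    measurableSet_Ioi
  simp [greenOperator_of_lt (Set.mem_Ioi.1 hs), units_inv_apply_apply]

theorem greenIntegral_eq (hP : HasExpDichotomy Φ α K P)
    (hΦ : IsFundamentalSolution A Φ) (hα : 0 < α) (hf : Continuous f) {C : ℝ}
    (hfC : ∀ t, ‖f t‖ ≤ C) (t : ℝ) :
    greenIntegral Φ P f t = (Φ t : E →L[ℝ] E) ((∫ s in Set.Iic t, (P * ↑(Φ s)⁻¹) (f s)) -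
      ∫ s in Set.Ioi t, ((1 - P) * ↑(Φ s)⁻¹) (f s)) := by
  have hint := hP.integrable_greenOperator_apply hΦ hα hf hfC t
  rw [greenIntegral, map_sub, sub_eq_add_neg,
    ← intervalIntegral.integral_Iic_add_Ioi hint.integrableOn hint.integrableOn,
    ← ContinuousLinearMap.integral_comp_comm _ (hP.integrableOn_Iic hΦ hα hf hfC t),
    ← ContinuousLinearMap.integral_comp_comm _ (hP.integrableOn_Ioi hΦ hα hf hfC t),
    ← integral_neg]
  refine congrArg₂ (· + ·) (setIntegral_congr_fun measurableSet_Iic fun s hs => ?_)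
    (setIntegral_congr_fun measurableSet_Ioi fun s hs => ?_)
  · simp only [greenOperator_of_le (Set.mem_Iic.1 hs), mul_assoc, mul_apply_eq_comp]
  · simp only [greenOperator_of_lt (Set.mem_Ioi.1 hs), mul_assoc, mul_apply_eq_comp, neg_apply]

theorem hasDerivAt_greenIntegral (hP : HasExpDichotomy Φ α K P)
    (hΦ : IsFundamentalSolution A Φ) (hα : 0 < α) (hf : Continuous f) {C : ℝ}
    (hfC : ∀ t, ‖f t‖ ≤ C) (t : ℝ) :
    HasDerivAt (greenIntegral Φ P f) (A t (greenIntegral Φ P f t) + f t) t := by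
  have hcont (Q : E →L[ℝ] E) : Continuous fun s => (Q * ↑(Φ s)⁻¹) (f s) :=
    (continuous_const.mul hΦ.continuous_inv).clm_apply hf
  have hderiv := (hΦ t).clm_apply <|
    (hasDerivAt_integral_Iic (hcont P) (hP.integrableOn_Iic hΦ hα hf hfC) t).sub
      (hasDerivAt_integral_Ioi (hcont (1 - P)) (hP.integrableOn_Ioi hΦ hα hf hfC) t)
  rw [funext (hP.greenIntegral_eq hΦ hα hf hfC)]
  refine hderiv.congr_deriv ?_
  simp [units_apply_inv_apply]

theorem hasDerivAt_iff_eq_greenIntegral (hP : HasExpDichotomy Φ α K P)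
    (hΦ : IsFundamentalSolution A Φ) (hα : 0 < α) (hf : Continuous f) {C D : ℝ}
    (hfC : ∀ t, ‖f t‖ ≤ C) {y : ℝ → E} (hy : ∀ t, ‖y t‖ ≤ D) :
    (∀ t, HasDerivAt y (A t (y t) + f t) t) ↔ y = greenIntegral Φ P f := by
  refine ⟨fun hsol => ?_, fun h => h ▸ hP.hasDerivAt_greenIntegral hΦ hα hf hfC⟩
  obtain ⟨w, hw⟩ := hΦ.exists_eq_apply (y := fun t => y t - greenIntegral Φ P f t) fun t =>
    ((hsol t).sub (hP.hasDerivAt_greenIntegral hΦ hα hf hfC t)).congr_deriv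
      (by rw [map_sub, add_sub_add_right_eq_sub])
  have hw0 : w = 0 := hP.eq_zero_of_forall_norm_apply_le hα fun t => by
    rw [← hw]
    exact (norm_sub_le _ _).trans (add_le_add (hy t) (hP.norm_greenIntegral_le hα hfC t))
  ext t
  simpa [hw0, sub_eq_zero] using hw t

end HasExpDichotomy

end Dichotomy

/-! ### Small perturbations -/

section Perturbation

variable {E : Type*} [NormedAddCommGroup E]

/-- `N` is an admissible nonlinearity on a set `B` of curves: it produces remotely almost periodic
functions bounded by `C`, and is Lipschitz with constant `L` in the supremum distance. -/
structure IsRAPNonlinearity (N : (ℝ → E) → ℝ → E) (B : Set (ℝ → E)) (C L : ℝ) : Prop where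
  rap : ∀ ψ ∈ B, RAP (N ψ)
  norm_le : ∀ ψ ∈ B, ∀ t, ‖N ψ t‖ ≤ C
  supLipschitzOn : SupLipschitzOn L N B

theorem isRAPNonlinearity_delay {g : ℝ → E → E → E} {ξ : ℝ → E} {r D C M : ℝ} (a : ℝ)
    (hξ : ∀ t, ‖ξ t‖ ≤ D)
    (hg : RAPUniform (fun t p => g t p.1 p.2) (closedBall (0 : E × E) (D + r)))
    (hgC : ∀ t, ∀ p ∈ closedBall (0 : E × E) (D + r), ‖g t p.1 p.2‖ ≤ C)
    (hlip : ∀ t x y z v, ‖x‖ ≤ D + r → ‖y‖ ≤ D + r → ‖z‖ ≤ D + r → ‖v‖ ≤ D + r →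
      ‖g t x y - g t z v‖ ≤ M * (‖x - z‖ + ‖y - v‖)) :
    IsRAPNonlinearity (fun ψ t => g t (ψ t) (ψ (t - a))) (rapBall ξ r) C (2 * |M|) := by
  have hnorm {ψ : ℝ → E} (hψ : ψ ∈ rapBall ξ r) (t : ℝ) : ‖ψ t‖ ≤ D + r :=
    norm_le_of_mem_rapBall hψ hξ t
  have hmem {ψ : ℝ → E} (hψ : ψ ∈ rapBall ξ r) (t : ℝ) :
      (ψ t, ψ (t - a)) ∈ closedBall (0 : E × E) (D + r) := by
    simpa [Prod.norm_def] using ⟨hnorm hψ t, hnorm hψ (t - a)⟩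
  refine ⟨fun ψ hψ => hg.comp_rap (hψ.1.prodMk (hψ.1.comp_sub_right a)) (hmem hψ),
    fun ψ hψ t => hgC t _ (hmem hψ t), fun ψ hψ φ hφ d hd t => ?_⟩
  calc ‖g t (ψ t) (ψ (t - a)) - g t (φ t) (φ (t - a))‖
      ≤ M * (‖ψ t - φ t‖ + ‖ψ (t - a) - φ (t - a)‖) :=
        hlip _ _ _ _ _ (hnorm hψ _) (hnorm hψ _) (hnorm hφ _) (hnorm hφ _)
    _ ≤ |M| * (d + d) := by
        gcongr
        exacts [le_abs_self M, hd t, hd (t - a)]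
    _ = 2 * |M| * d := by ring

variable [NormedSpace ℝ E] [CompleteSpace E] {A : ℝ → E →L[ℝ] E} {Φ : ℝ → (E →L[ℝ] E)ˣ}
  {P : E →L[ℝ] E} {α K : ℝ}

namespace HasExpDichotomy

theorem hasDerivAt_iff_eq_add_greenIntegral (hP : HasExpDichotomy Φ α K P)
    (hΦ : IsFundamentalSolution A Φ) (hα : 0 < α) {h ξ f ψ : ℝ → E} {C D : ℝ}
    (hξ : ∀ t, HasDerivAt ξ (A t (ξ t) + h t) t) (hf : Continuous f) (hfC : ∀ t, ‖f t‖ ≤ C)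
    (hψξ : ∀ t, ‖ψ t - ξ t‖ ≤ D) :
    (∀ t, HasDerivAt ψ (A t (ψ t) + h t + f t) t) ↔
      ψ = fun t => ξ t + greenIntegral Φ P f t := by
  have hdiff : (∀ t, HasDerivAt ψ (A t (ψ t) + h t + f t) t) ↔
      ∀ t, HasDerivAt (fun s => ψ s - ξ s) (A t (ψ t - ξ t) + f t) t := by
    refine forall_congr' fun t => ⟨fun hψ => ?_, fun hψ => ?_⟩
    · exact (hψ.sub (hξ t)).congr_deriv (by rw [map_sub]; abel)
    · simpa only [sub_add_cancel] using (hψ.fun_add (hξ t)).congr_deriv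
        (g' := A t (ψ t) + h t + f t) (by rw [map_sub]; abel)
  rw [hdiff, hP.hasDerivAt_iff_eq_greenIntegral hΦ hα hf hfC hψξ]
  simp only [funext_iff, sub_eq_iff_eq_add']

variable {h ξ : ℝ → E} {N : (ℝ → E) → ℝ → E} {r C L ν : ℝ}

theorem hasDerivAt_smul_iff_eq_add_smul_greenIntegral (hP : HasExpDichotomy Φ α K P)
    (hΦ : IsFundamentalSolution A Φ) (hα : 0 < α)
    (hξ : ∀ t, HasDerivAt ξ (A t (ξ t) + h t) t) (hN : IsRAPNonlinearity N (rapBall ξ r) C L)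
    {ψ : ℝ → E} (hψ : ψ ∈ rapBall ξ r) :
    (∀ t, HasDerivAt ψ (A t (ψ t) + h t + ν • N ψ t) t) ↔
      ψ = fun t => ξ t + ν • greenIntegral Φ P (N ψ) t := by
  have hbound (t : ℝ) : ‖ν • N ψ t‖ ≤ ‖ν‖ * C := by
    rw [norm_smul]
    exact mul_le_mul_of_nonneg_left (hN.norm_le ψ hψ t) (norm_nonneg ν)
  rw [hP.hasDerivAt_iff_eq_add_greenIntegral (f := fun t => ν • N ψ t) hΦ hα hξ
    ((hN.rap ψ hψ).continuous.const_smul ν) hbound hψ.2, greenIntegral_const_smul]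

theorem supLipschitzOn_greenIntegral (hP : HasExpDichotomy Φ α K P)
    (hΦ : IsFundamentalSolution A Φ) (hα : 0 < α) {B : Set (ℝ → E)}
    (hN : IsRAPNonlinearity N B C L) :
    SupLipschitzOn (2 * K / α * L) (fun ψ => greenIntegral Φ P (N ψ)) B := by
  intro ψ hψ φ hφ d hd t
  rw [hP.greenIntegral_sub hΦ hα (hN.rap ψ hψ).continuous (hN.norm_le ψ hψ)
    (hN.rap φ hφ).continuous (hN.norm_le φ hφ), mul_assoc]
  exact hP.norm_greenIntegral_le hα (hN.supLipschitzOn ψ hψ φ hφ d hd) t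

theorem norm_sub_le_of_hasDerivAt (hP : HasExpDichotomy Φ α K P)
    (hΦ : IsFundamentalSolution A Φ) (hα : 0 < α)
    (hξ : ∀ t, HasDerivAt ξ (A t (ξ t) + h t) t) (hN : IsRAPNonlinearity N (rapBall ξ r) C L)
    (hν : 0 ≤ ν) {ψ : ℝ → E} (hψ : ψ ∈ rapBall ξ r)
    (hsol : ∀ t, HasDerivAt ψ (A t (ψ t) + h t + ν • N ψ t) t) (t : ℝ) :
    ‖ψ t - ξ t‖ ≤ ν * (2 * K / α * C) := by
  rw [congrFun ((hP.hasDerivAt_smul_iff_eq_add_smul_greenIntegral hΦ hα hξ hN hψ).1 hsol) t,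
    add_sub_cancel_left, norm_smul, Real.norm_of_nonneg hν]
  exact mul_le_mul_of_nonneg_left (hP.norm_greenIntegral_le hα (hN.norm_le ψ hψ) t) hν

theorem existsUnique_rap_solution (hP : HasExpDichotomy Φ α K P)
    (hΦ : IsFundamentalSolution A Φ) (hα : 0 < α)
    (hG : ∀ f : ℝ → E, RAP f → RAP (greenIntegral Φ P f)) (hξRAP : RAP ξ)
    (hξ : ∀ t, HasDerivAt ξ (A t (ξ t) + h t) t) (hN : IsRAPNonlinearity N (rapBall ξ r) C L)
    (hr : 0 ≤ r) (hν : 0 ≤ ν) (hνC : ν * (2 * K / α * C) ≤ r)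
    {q : ℝ≥0} (hq : q < 1) (hνL : ν * (2 * K / α * L) ≤ q) :
    ∃! ψ, ψ ∈ rapBall ξ r ∧ ∀ t, HasDerivAt ψ (A t (ψ t) + h t + ν • N ψ t) t := by
  simp only [and_congr_right fun hψ =>
    hP.hasDerivAt_smul_iff_eq_add_smul_greenIntegral hΦ hα hξ hN hψ]
  refine existsUnique_fixedPoint_of_mapsTo_rapBall ⟨hξRAP, fun t => by simpa using hr⟩ hq
    (fun ψ hψ => ⟨hξRAP.add ((hG _ (hN.rap ψ hψ)).const_smul ν), fun t => ?_⟩)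
    fun ψ hψ φ hφ d hd t => ?_
  · rw [add_sub_cancel_left, norm_smul, Real.norm_of_nonneg hν]
    exact (mul_le_mul_of_nonneg_left
      (hP.norm_greenIntegral_le hα (hN.norm_le ψ hψ) t) hν).trans hνC
  · have hd0 : 0 ≤ d := (norm_nonneg _).trans (hd 0)
    rw [add_sub_add_left_eq_sub, ← smul_sub, norm_smul, Real.norm_of_nonneg hν]
    refine (mul_le_mul_of_nonneg_left
      (hP.supLipschitzOn_greenIntegral hΦ hα hN ψ hψ φ hφ d hd t) hν).trans ?_
    rw [← mul_assoc]
    exact mul_le_mul_of_nonneg_right hνL hd0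

end HasExpDichotomy

theorem tendsto_of_norm_sub_le_mul {F : Type*} [NormedAddCommGroup F] {u : ℝ → F} {x : F}
    {c ν₀ : ℝ} (h : ∀ ν ∈ Set.Ioc 0 ν₀, ‖u ν - x‖ ≤ ν * c) :
    Tendsto u (nhdsWithin 0 (Set.Ioc 0 ν₀)) (nhds x) := by
  refine tendsto_iff_norm_sub_tendsto_zero.2 (squeeze_zero' (.of_forall fun _ => norm_nonneg _)
    (eventually_nhdsWithin_of_forall h) ?_)
  exact ((continuous_mul_const c).tendsto' 0 0 (zero_mul c)).mono_left nhdsWithin_le_nhds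

theorem exists_pos_forall_mem_Icc_mul_le {ε : ℝ} (hε : 0 < ε) (c : ℝ) :
    ∃ ν₀ > 0, ∀ ν ∈ Set.Icc 0 ν₀, ν * c ≤ ε := by
  obtain ⟨ν₀, hν₀, h⟩ := exists_pos_mul_lt hε |c|
  refine ⟨ν₀, hν₀, fun ν hν => ?_⟩
  calc ν * c ≤ ν * |c| := mul_le_mul_of_nonneg_left (le_abs_self c) hν.1
    _ ≤ ν₀ * |c| := mul_le_mul_of_nonneg_right hν.2 (abs_nonneg c)
    _ ≤ ε := by rw [mul_comm]; exact h.le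

end Perturbation

theorem exists_unique_RAP_solution_delayed_linear_general {E : Type*} [NormedAddCommGroup E]
    [NormedSpace ℝ E] [CompleteSpace E] {A : ℝ → E →L[ℝ] E} {Φ : ℝ → (E →L[ℝ] E)ˣ}
    {P : E →L[ℝ] E} {α K : ℝ} {h ξ : ℝ → E} (a : ℝ) {g : ℝ → E → E → E} {M₁ : ℝ → ℝ}
    (hα : 0 < α) (hΦ : IsFundamentalSolution A Φ)
    (hP : HasExpDichotomy Φ α K P) (hG : ∀ f : ℝ → E, RAP f → RAP (greenIntegral Φ P f))
    (hξRAP : RAP ξ) (hξsol : ∀ t, HasDerivAt ξ (A t (ξ t) + h t) t)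
    (hgRAP : ∀ S : Set (E × E), Bornology.IsBounded S → RAPUniform (fun t p => g t p.1 p.2) S)
    (hglip : ∀ r > 0, ∀ t, ∀ x y z v : E, ‖x‖ ≤ r → ‖y‖ ≤ r → ‖z‖ ≤ r → ‖v‖ ≤ r →
      ‖g t x y - g t z v‖ ≤ M₁ r * (‖x - z‖ + ‖y - v‖)) :
    ∀ r > 0, ∃ ν₀ > 0,
      (∀ ν ∈ Set.Icc (0 : ℝ) ν₀, ∃! ψ : ℝ → E, RAP ψ ∧
        (∀ t, HasDerivAt ψ (A t (ψ t) + h t + ν • g t (ψ t) (ψ (t - a))) t) ∧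
        ∀ t, ‖ψ t - ξ t‖ ≤ r) ∧
      ∀ ψ : ℝ → ℝ → E,
        (∀ ν ∈ Set.Icc (0 : ℝ) ν₀, RAP (ψ ν) ∧
          (∀ t, HasDerivAt (ψ ν) (A t (ψ ν t) + h t + ν • g t (ψ ν t) (ψ ν (t - a))) t) ∧
          ∀ t, ‖ψ ν t - ξ t‖ ≤ r) →
        ∀ t, Tendsto (fun ν => ψ ν t) (nhdsWithin 0 (Set.Ioc 0 ν₀)) (nhds (ξ t)) := by
  intro r hr
  obtain ⟨D, hD⟩ := hξRAP.1
  have hDr : 0 < D + r := add_pos_of_nonneg_of_pos ((norm_nonneg _).trans (hD 0)) hr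
  have hgball := hgRAP (closedBall 0 (D + r)) isBounded_closedBall
  obtain ⟨C, hC⟩ := hgball.1
  have hN := isRAPNonlinearity_delay a hD hgball hC (hglip _ hDr)
  obtain ⟨ν₁, hν₁, hνC⟩ := exists_pos_forall_mem_Icc_mul_le hr (2 * K / α * C)
  obtain ⟨ν₂, hν₂, hνL⟩ := exists_pos_forall_mem_Icc_mul_le one_half_pos
    (2 * K / α * (2 * |M₁ (D + r)|))
  refine ⟨min ν₁ ν₂, lt_min hν₁ hν₂, fun ν ⟨hν, hνle⟩ => ?_, fun ψ hψ t => ?_⟩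
  · refine (existsUnique_congr fun ψ => and_right_comm.trans and_assoc).1
      (hP.existsUnique_rap_solution hΦ hα hG hξRAP hξsol hN hr.le hν
        (hνC ν ⟨hν, hνle.trans (min_le_left _ _)⟩) (NNReal.half_lt_self one_ne_zero) ?_)
    simpa using hνL ν ⟨hν, hνle.trans (min_le_right _ _)⟩
  · refine tendsto_of_norm_sub_le_mul (c := 2 * K / α * C) fun ν hν => ?_
    obtain ⟨hrap, hsol, hclose⟩ := hψ ν (Set.Ioc_subset_Icc_self hν)
    exact hP.norm_sub_le_of_hasDerivAt hΦ hα hξsol hN hν.1.le ⟨hrap, hclose⟩ hsol t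

/-! ### Matrix systems -/

section Matrix

variable {n : ℕ} {A Φ : ℝ → Matrix (Fin n) (Fin n) ℝ} {P : Matrix (Fin n) (Fin n) ℝ} {α K : ℝ}

theorem hasDerivAt_toEuclideanCLM {M : ℝ → Matrix (Fin n) (Fin n) ℝ}
    {M' : Matrix (Fin n) (Fin n) ℝ} {t : ℝ} (h : ∀ i j, HasDerivAt (fun s => M s i j) (M' i j) t) :
    HasDerivAt (fun s => Matrix.toEuclideanCLM (𝕜 := ℝ) (M s))
      (Matrix.toEuclideanCLM (𝕜 := ℝ) M') t := by
  have hsum (N : Matrix (Fin n) (Fin n) ℝ) : Matrix.toEuclideanCLM (𝕜 := ℝ) N =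
      ∑ i, ∑ j, N i j • Matrix.toEuclideanCLM (𝕜 := ℝ) (Matrix.single i j 1) := by
    conv_lhs => rw [Matrix.matrix_eq_sum_single N]
    simp only [map_sum, ← map_smul, Matrix.smul_single, smul_eq_mul, mul_one]
  rw [hsum M', funext fun s => hsum (M s)]
  exact .fun_sum fun i _ => .fun_sum fun j _ =>
    (h i j).smul_const (Matrix.toEuclideanCLM (𝕜 := ℝ) (Matrix.single i j 1))

/-- The operators on Euclidean space given by a fundamental matrix. -/
noncomputable def IsFundamentalMatrix.toUnits (hΦ : IsFundamentalMatrix A Φ) (t : ℝ) :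
    (EuclideanSpace ℝ (Fin n) →L[ℝ] EuclideanSpace ℝ (Fin n))ˣ :=
  Units.map (Matrix.toEuclideanCLM (n := Fin n) (𝕜 := ℝ)) (hΦ.2.1 t).unit

namespace IsFundamentalMatrix

theorem coe_toUnits (hΦ : IsFundamentalMatrix A Φ) (t : ℝ) :
    (hΦ.toUnits t : _ →L[ℝ] _) = Matrix.toEuclideanCLM (𝕜 := ℝ) (Φ t) :=
  rfl

theorem coe_toUnits_inv (hΦ : IsFundamentalMatrix A Φ) (t : ℝ) :
    (↑(hΦ.toUnits t)⁻¹ : _ →L[ℝ] _) = Matrix.toEuclideanCLM (𝕜 := ℝ) (Φ t)⁻¹ := by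
  rw [← IsUnit.unit_spec (hΦ.2.1 t), ← Matrix.coe_units_inv]
  rfl

theorem isFundamentalSolution (hΦ : IsFundamentalMatrix A Φ) :
    IsFundamentalSolution (fun t => Matrix.toEuclideanCLM (𝕜 := ℝ) (A t)) hΦ.toUnits := by
  intro t
  simp only [coe_toUnits, ← map_mul]
  exact hasDerivAt_toEuclideanCLM (hΦ.2.2 t)

theorem hasExpDichotomy (hΦ : IsFundamentalMatrix A Φ) (hdich : ExpDichotomy Φ α K P) :
    HasExpDichotomy hΦ.toUnits α K (Matrix.toEuclideanCLM (𝕜 := ℝ) P) := by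
  refine ⟨IsIdempotentElem.map (e := P) hdich.1 _, fun t s hst => ?_, fun t s hts => ?_⟩
  · rw [coe_toUnits, coe_toUnits_inv, ← map_mul, ← map_mul]
    exact hdich.2.1 t s hst
  · rw [coe_toUnits, coe_toUnits_inv, ← map_one (Matrix.toEuclideanCLM (n := Fin n) (𝕜 := ℝ)),
      ← map_sub, ← map_mul, ← map_mul]
    exact hdich.2.2 t s hts

theorem toEuclideanCLM_greenKernel (hΦ : IsFundamentalMatrix A Φ) (t s : ℝ) :
    Matrix.toEuclideanCLM (𝕜 := ℝ) (GreenKernel Φ P t s) =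
      greenOperator hΦ.toUnits (Matrix.toEuclideanCLM (𝕜 := ℝ) P) t s := by
  simp only [GreenKernel, greenOperator, apply_ite (Matrix.toEuclideanCLM (n := Fin n) (𝕜 := ℝ)),
    coe_toUnits, coe_toUnits_inv, map_neg, map_mul, map_sub, map_one]

theorem rap_greenIntegral (hΦ : IsFundamentalMatrix A Φ)
    (hG : RAPIntegralProperty (GreenKernel Φ P)) {f : ℝ → EuclideanSpace ℝ (Fin n)}
    (hf : RAP f) :
    RAP (greenIntegral hΦ.toUnits (Matrix.toEuclideanCLM (𝕜 := ℝ) P) f) := by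
  unfold greenIntegral
  simp only [← toEuclideanCLM_greenKernel]
  exact hG f hf

end IsFundamentalMatrix

end Matrix

/-- Theorem: RAP solutions of the delayed system
`y'(t) = A(t)y(t) + h(t) + ν·g(t, y(t), y(t-a))`. -/
theorem exists_unique_RAP_solution_delayed_linear {n : ℕ}
    (A Φ : ℝ → Matrix (Fin n) (Fin n) ℝ)
    (P : Matrix (Fin n) (Fin n) ℝ) (α K : ℝ)
    (h : ℝ → EuclideanSpace ℝ (Fin n))
    (ξ : ℝ → EuclideanSpace ℝ (Fin n))
    (a : ℝ) (ha : 0 < a)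
    (g : ℝ → EuclideanSpace ℝ (Fin n) → EuclideanSpace ℝ (Fin n) →
      EuclideanSpace ℝ (Fin n))
    (M₁ : ℝ → ℝ)
    (hα : 0 < α) (hK : 1 ≤ K)
    (hARAP : RAPMatrix A)
    (hΦ : IsFundamentalMatrix A Φ)
    (hdich : ExpDichotomy Φ α K P)
    (hGreen : RAPIntegralProperty (GreenKernel Φ P))
    (hhRAP : RAP h)
    (hξRAP : RAP ξ)
    (hξsol : ∀ t, HasDerivAt ξ (mulVecE (A t) (ξ t) + h t) t)
    (hξuniq : ∀ η : ℝ → EuclideanSpace ℝ (Fin n), RAP η →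
      (∀ t, HasDerivAt η (mulVecE (A t) (η t) + h t) t) → η = ξ)
    (hgbdd : ∃ C, ∀ t : ℝ, ∀ x y : EuclideanSpace ℝ (Fin n), ‖g t x y‖ ≤ C)
    (hgRAP : ∀ S : Set (EuclideanSpace ℝ (Fin n) × EuclideanSpace ℝ (Fin n)),
      Bornology.IsBounded S → RAPUniform (fun t p => g t p.1 p.2) S)
    (hglip : ∀ r > 0, ∀ t : ℝ, ∀ x y z v : EuclideanSpace ℝ (Fin n),
      ‖x‖ ≤ r → ‖y‖ ≤ r → ‖z‖ ≤ r → ‖v‖ ≤ r →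
      ‖g t x y - g t z v‖ ≤ M₁ r * (‖x - z‖ + ‖y - v‖)) :
    ∀ r > 0, ∃ ν₀ > 0,
      (∀ ν ∈ Set.Icc (0:ℝ) ν₀,
        ∃! ψ : ℝ → EuclideanSpace ℝ (Fin n),
          RAP ψ ∧
          (∀ t, HasDerivAt ψ
            (mulVecE (A t) (ψ t) + h t + ν • g t (ψ t) (ψ (t - a))) t) ∧
          ∀ t, ‖ψ t - ξ t‖ ≤ r) ∧
      (∀ ψ : ℝ → ℝ → EuclideanSpace ℝ (Fin n),
        (∀ ν ∈ Set.Icc (0:ℝ) ν₀, RAP (ψ ν) ∧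
          (∀ t, HasDerivAt (ψ ν)
            (mulVecE (A t) (ψ ν t) + h t + ν • g t (ψ ν t) (ψ ν (t - a))) t) ∧
          ∀ t, ‖ψ ν t - ξ t‖ ≤ r) →
        ∀ t, Filter.Tendsto (fun ν => ψ ν t)
          (nhdsWithin 0 (Set.Ioc 0 ν₀)) (nhds (ξ t))) := by
  exact exists_unique_RAP_solution_delayed_linear_general
    (A := fun t => Matrix.toEuclideanCLM (𝕜 := ℝ) (A t)) a hα hΦ.isFundamentalSolution
    (hΦ.hasExpDichotomy hdich) (fun _ => hΦ.rap_greenIntegral hGreen) hξRAP hξsol hgRAP hglip
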